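/- Fix an even integer δ ≥ 2 and D ∈ (0, 1/2]. For each n in an infinite set of blocklengths with D·n ∈ ℕ, let C_b^{(n)} ⊆ (ZMod 2)^{m_n} be a linear subspace, let x(·) be the random encoding of the degree-δ LDGM ensemble with m_n inputs and blocklength n, and let S be uniform on (ZMod 2)^n, independent of the ensemble; define B_n := Σ_{z ∈ C_b^{(n)}, z ≠ 0} P(hammingDist(x(z), S) ≤ D·n ∣ wt(S) ≤ D·n). Suppose that for all sufficiently large n one has B_n ≥ 1 and |C_b^{(n)}| · 2^{−n(1 − h(D))} ≥ B_n. Then for every ε > 0, P(min_{z ∈ C_b^{(n)}} hammingDist(x(z), S) > (D + ε)·n) → 0 as n → ∞ along the sequence. -/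

import Mathlib

/-!
Write `n` for the blocklength and `d_min` for the minimum distance from the source `S` to the
encodings of `C_b`. The argument is a weak second-moment bound boosted by concentration.

*Second moment.* Let `T` count the `z ∈ C_b` with `hammingDist (x(z)) S ≤ D n`. For each fixed `z`
the word `S - x(z)` is uniform, so `E T = |C_b| · P(wt S ≤ D n)`. Translating `S` by `x(w)` and using
linearity of the encoder, the joint event for `z, w` has the probability of the event
`{hammingDist (x(z-w)) S ≤ D n, wt S ≤ D n}`, so `E T² = E T · (1 + B)`. Cauchy–Schwarz gives
`P(d_min ≤ D n) = P(T > 0) ≥ E T / (1 + B)` (`second_moment`). The entropy bound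
`P(wt S ≤ D n) ≥ 2^{-n(1-h(D))} / (n+1)` (`two_rpow_le_ball`) and the hypotheses on `B` turn
this into `P(d_min ≤ D n) ≥ 1 / (2(n+1))`.

*Concentration.* `d_min` is a function of the `n` independent pairs (index row, source bit) and
changes by at most `1` when one pair is changed. For such a function `f`,
`E[e^{lf}] · E[e^{-lf}] ≤ (cosh l)^n ≤ e^{n l² / 2}` (`sum_exp_mul_sum_exp_neg_le`), by induction
on `n`; Markov's inequality with `l = ε` yields
`P(d_min ≤ D n) · P(d_min > (D+ε) n) ≤ e^{-ε² n / 2}` (`unifP_mul_unifP_le`).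

Together, `P(d_min > (D+ε) n) ≤ 2 (n+1) e^{-ε² n / 2} → 0`.
-/

open Finset
open scoped BigOperators Classical

noncomputable section

/-- `ldgmBeta w δ = (1 - (1-2w)^δ)/2`: the Bernoulli parameter induced by an
input of relative weight `w` in the degree-`δ` LDGM ensemble. -/
def ldgmBeta (w : ℝ) (δ : ℕ) : ℝ := (1 - (1 - 2 * w) ^ δ) / 2

/-- `ldgmU D δ = (1 - (1-2D)^(1/δ))/2`. -/
def ldgmU (D : ℝ) (δ : ℕ) : ℝ := (1 - (1 - 2 * D) ^ ((1 : ℝ) / δ)) / 2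

/-- Binary entropy function (in bits). -/
def binEnt (x : ℝ) : ℝ := -(x * Real.logb 2 x) - (1 - x) * Real.logb 2 (1 - x)

/-- Binary Kullback–Leibler divergence (in bits). -/
def klBin (a p : ℝ) : ℝ := a * Real.logb 2 (a / p) + (1 - a) * Real.logb 2 ((1 - a) / (1 - p))

/-- Probability of the event `E` under the uniform distribution on the finite type `Ω`. -/
def unifP (Ω : Type*) [Fintype Ω] (E : Ω → Prop) : ℝ :=
  ((Finset.univ.filter E).card : ℝ) / (Fintype.card Ω : ℝ)

/-- Conditional probability of `E` given `F` under the uniform distribution on `Ω`. -/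
def unifCondP (Ω : Type*) [Fintype Ω] (E F : Ω → Prop) : ℝ :=
  unifP Ω (fun ω => E ω ∧ F ω) / unifP Ω F

/-- Expectation of `f` under the uniform distribution on the finite type `Ω`. -/
def unifE (Ω : Type*) [Fintype Ω] (f : Ω → ℝ) : ℝ :=
  (∑ ω : Ω, f ω) / (Fintype.card Ω : ℝ)

/-- The encoding map of the degree-`δ` LDGM ensemble with `m` inputs and blocklength `n`:
given the random index choices `I`, the `j`-th codeword bit of `z` is
`z (I j 1) + ⋯ + z (I j δ)` (mod 2). -/
def ldgmEnc {m n δ : ℕ} (I : Fin n → Fin δ → Fin m) (z : Fin m → ZMod 2) :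
    Fin n → ZMod 2 := fun j => ∑ i : Fin δ, z (I j i)


/-! ### Bounded differences -/

/-- Symmetrised moment-generating-function bound for a function on a product space that changes by
at most `1` when a single coordinate is changed. Divided by `|α|^(2n)`, it reads
`E[e^{lf}] · E[e^{-lf}] ≤ (cosh l)^n`. -/
lemma sum_exp_mul_sum_exp_neg_le {α : Type*} [Fintype α] (l : ℝ) (hl : 0 ≤ l) :
    ∀ (n : ℕ) (f : (Fin n → α) → ℝ),
      (∀ x i a, f (Function.update x i a) ≤ f x + 1) →
      (∑ x, Real.exp (l * f x)) * (∑ x, Real.exp (-(l * f x))) ≤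
        ((Fintype.card α : ℝ) ^ 2 * Real.cosh l) ^ n
  | 0, f, _ => by
    simp [← Real.exp_add]
  | n + 1, f, hf => by
    set c : ℝ := ((Fintype.card α : ℝ) ^ 2 * Real.cosh l) ^ n with hc
    have hc0 : 0 ≤ c := by
      have := Real.cosh_pos l
      positivity
    -- `F a` and `G a` are the two sums with the first coordinate frozen at `a`.
    let F : α → ℝ := fun a => ∑ x : Fin n → α, Real.exp (l * f (Fin.cons a x))
    let G : α → ℝ := fun a => ∑ x : Fin n → α, Real.exp (-(l * f (Fin.cons a x)))
    have split : ∀ g : (Fin (n + 1) → α) → ℝ,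
        ∑ x, g x = ∑ a, ∑ x : Fin n → α, g (Fin.cons a x) := by
      intro g
      rw [← Fintype.sum_prod_type']
      exact (Fintype.sum_equiv (Fin.consEquiv (fun _ => α)) _ _ (fun _ => rfl)).symm
    have hcons : ∀ a b (x : Fin n → α),
        f (Fin.cons a x : Fin (n + 1) → α) ≤ f (Fin.cons b x : Fin (n + 1) → α) + 1 := by
      intro a b x
      have := hf (Fin.cons b x) 0 a
      rwa [Fin.update_cons_zero] at this
    have hFG : ∀ a, F a * G a ≤ c := by
      intro a
      refine sum_exp_mul_sum_exp_neg_le l hl n (fun x => f (Fin.cons a x)) ?_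
      intro x i b
      rw [Fin.cons_update]
      exact hf _ _ _
    have hF0 : ∀ a, 0 ≤ F a := fun a => Finset.sum_nonneg fun _ _ => (Real.exp_pos _).le
    have hG0 : ∀ a, 0 ≤ G a := fun a => Finset.sum_nonneg fun _ _ => (Real.exp_pos _).le
    have hF : ∀ a b, F a ≤ Real.exp l * F b := by
      intro a b
      simp only [F, Finset.mul_sum, ← Real.exp_add]
      refine Finset.sum_le_sum fun x _ => Real.exp_le_exp.2 ?_
      nlinarith [hcons a b x]
    have hpair : ∀ a b, F a * G b + F b * G a ≤ 2 * (c * Real.cosh l) := by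
      intro a b
      set M := Real.exp l with hM
      have hM0 : 0 < M := Real.exp_pos l
      have h1 : F a * G b ≤ M * c := by
        calc F a * G b ≤ (M * F b) * G b := mul_le_mul_of_nonneg_right (hF a b) (hG0 b)
          _ = M * (F b * G b) := by ring
          _ ≤ M * c := mul_le_mul_of_nonneg_left (hFG b) hM0.le
      have h2 : F b * G a ≤ M * c := by
        calc F b * G a ≤ (M * F a) * G a := mul_le_mul_of_nonneg_right (hF b a) (hG0 a)
          _ = M * (F a * G a) := by ring
          _ ≤ M * c := mul_le_mul_of_nonneg_left (hFG a) hM0.le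
      have h3 : (F a * G b) * (F b * G a) ≤ c * c := by
        calc (F a * G b) * (F b * G a) = (F a * G a) * (F b * G b) := by ring
          _ ≤ c * c := mul_le_mul (hFG a) (hFG b) (mul_nonneg (hF0 b) (hG0 b)) hc0
      have h4 : 2 * (c * Real.cosh l) = c * (M + M⁻¹) := by
        rw [Real.cosh_eq, Real.exp_neg]; ring
      rw [h4]
      rcases hc0.eq_or_lt with h | h
      · rw [← h] at h1 h2 ⊢
        linarith
      -- Two numbers in `[0, Mc]` with product at most `c²` have sum at most `Mc + c/M`.
      · have h5 : (M * c) * (F a * G b + F b * G a) ≤ (M * c) * (c * (M + M⁻¹)) := by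
          have : (M * c) * (c * (M + M⁻¹)) = M * M * c * c + c * c := by
            field_simp
          rw [this]
          nlinarith [mul_nonneg (sub_nonneg.2 h1) (sub_nonneg.2 h2)]
        exact le_of_mul_le_mul_left h5 (by positivity)
    have e1 : (∑ x, Real.exp (l * f x)) * (∑ x, Real.exp (-(l * f x)))
        = ∑ a, ∑ b, F a * G b := by
      rw [split, split, Finset.sum_mul_sum]
    have e2 : ∑ a, ∑ b, F a * G b = ∑ a, ∑ b, F b * G a := Finset.sum_comm
    have e3 : 2 * ∑ a, ∑ b, F a * G b = ∑ a, ∑ b, (F a * G b + F b * G a) := by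
      simp only [Finset.sum_add_distrib]
      rw [← e2]; ring
    have e4 : ∑ a, ∑ b, (F a * G b + F b * G a) ≤ ∑ _a : α, ∑ _b : α, 2 * (c * Real.cosh l) :=
      Finset.sum_le_sum fun a _ => Finset.sum_le_sum fun b _ => hpair a b
    simp only [Finset.sum_const, Finset.card_univ, nsmul_eq_mul] at e4
    rw [e1, pow_succ, ← hc]
    linarith

/-- Under the bounded-difference condition, a lower and an upper deviation event separated by
`ε n` cannot both have large cardinality. -/
lemma card_mul_card_le {α : Type*} [Fintype α] (n : ℕ) (f : (Fin n → α) → ℝ)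
    (hf : ∀ x i a, f (Function.update x i a) ≤ f x + 1) (D ε : ℝ) (hε : 0 < ε) :
    ((univ.filter fun x => f x ≤ D * n).card : ℝ) *
      ((univ.filter fun x => (D + ε) * n < f x).card : ℝ) ≤
      ((Fintype.card α : ℝ) ^ n) ^ 2 * Real.exp (-(ε ^ 2 / 2 * n)) := by
  have h := sum_exp_mul_sum_exp_neg_le ε hε.le n f hf
  have h1 : ((univ.filter fun x => f x ≤ D * n).card : ℝ) * Real.exp (-(ε * (D * n))) ≤
      ∑ x, Real.exp (-(ε * f x)) := by
    rw [← nsmul_eq_mul, ← Finset.sum_const]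
    refine (Finset.sum_le_sum fun x hx => ?_).trans
      (Finset.sum_le_sum_of_subset_of_nonneg (Finset.filter_subset _ _)
        fun _ _ _ => (Real.exp_pos _).le)
    exact Real.exp_le_exp.2 (neg_le_neg (mul_le_mul_of_nonneg_left (Finset.mem_filter.1 hx).2 hε.le))
  have h2 : ((univ.filter fun x => (D + ε) * n < f x).card : ℝ) * Real.exp (ε * ((D + ε) * n)) ≤
      ∑ x, Real.exp (ε * f x) := by
    rw [← nsmul_eq_mul, ← Finset.sum_const]
    refine (Finset.sum_le_sum fun x hx => ?_).trans
      (Finset.sum_le_sum_of_subset_of_nonneg (Finset.filter_subset _ _)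
        fun _ _ _ => (Real.exp_pos _).le)
    exact Real.exp_le_exp.2 (mul_le_mul_of_nonneg_left (Finset.mem_filter.1 hx).2.le hε.le)
  have h3 := mul_le_mul h2 h1 (by positivity) (Finset.sum_nonneg fun _ _ => (Real.exp_pos _).le)
  have h4 : Real.cosh ε ^ n ≤ Real.exp (ε ^ 2 / 2 * n) := by
    rw [mul_comm, Real.exp_nat_mul]
    exact pow_le_pow_left₀ (Real.cosh_pos _).le (Real.cosh_le_exp_half_sq ε) n
  set P := ((univ.filter fun x => f x ≤ D * n).card : ℝ)
  set Q := ((univ.filter fun x => (D + ε) * n < f x).card : ℝ)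
  have h5 : P * Q * Real.exp (ε ^ 2 * n) ≤
      ((Fintype.card α : ℝ) ^ n) ^ 2 * Real.exp (ε ^ 2 / 2 * n) := by
    calc P * Q * Real.exp (ε ^ 2 * n)
        = Q * Real.exp (ε * ((D + ε) * n)) * (P * Real.exp (-(ε * (D * n)))) := by
          have : Real.exp (ε ^ 2 * n) =
              Real.exp (ε * ((D + ε) * n)) * Real.exp (-(ε * (D * n))) := by
            rw [← Real.exp_add]; congr 1; ring
          rw [this]; ring
      _ ≤ _ := h3.trans h
      _ = ((Fintype.card α : ℝ) ^ n) ^ 2 * Real.cosh ε ^ n := by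
          rw [mul_pow, ← pow_mul, ← pow_mul, mul_comm 2 n]
      _ ≤ _ := by gcongr
  have h6 : Real.exp (-(ε ^ 2 / 2 * n)) = Real.exp (ε ^ 2 / 2 * n) / Real.exp (ε ^ 2 * n) := by
    rw [← Real.exp_sub]; congr 1; ring
  rw [h6, ← mul_div_assoc, le_div_iff₀ (Real.exp_pos _)]
  exact h5

/-! ### Volume of a Hamming ball -/

/-- The mode of the binomial distribution with `n` trials and success probability `k/n` is `k`,
in a form without denominators. -/
lemma binomial_term_le_mode (n k : ℕ) (hk : k < n) (hk0 : 0 < k) (j : ℕ) (hj : j ≤ n) :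
    n.choose j * k ^ j * (n - k) ^ (n - j) ≤ n.choose k * k ^ k * (n - k) ^ (n - k) := by
  have step : ∀ i, i < n → (n.choose (i + 1) * k ^ (i + 1) * (n - k) ^ (n - (i + 1))) *
      ((i + 1) * (n - k)) = (n.choose i * k ^ i * (n - k) ^ (n - i)) * ((n - i) * k) := by
    intro i hi
    have h1 := Nat.choose_succ_right_eq n i
    have h2 : n - i = (n - (i + 1)) + 1 := by omega
    have h3 : (n - k) ^ (n - i) = (n - k) ^ (n - (i + 1)) * (n - k) := by
      rw [h2, pow_succ]
    rw [h3, pow_succ]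
    calc _ = (n.choose (i + 1) * (i + 1)) * (k ^ i * k * (n - k) ^ (n - (i + 1)) * (n - k)) := by
          ring
      _ = _ := by rw [h1]; ring
  rcases le_total j k with h | h
  · induction h using Nat.decreasingInduction with
    | self => exact le_rfl
    | of_succ i hi ih =>
      refine le_trans ?_ (ih (by omega))
      have hs := step i (by omega)
      have hle : (i + 1) * (n - k) ≤ (n - i) * k := by
        obtain ⟨a, rfl⟩ : ∃ a, k = i + 1 + a := ⟨k - (i + 1), by omega⟩
        obtain ⟨b, rfl⟩ : ∃ b, n = i + 1 + a + b := ⟨n - (i + 1 + a), by omega⟩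
        have e1 : i + 1 + a + b - (i + 1 + a) = b := by omega
        have e2 : i + 1 + a + b - i = 1 + a + b := by omega
        rw [e1, e2]; nlinarith [Nat.zero_le (a * b), Nat.zero_le (i * a)]
      have hpos : 0 < (i + 1) * (n - k) := Nat.mul_pos (by omega) (by omega)
      refine Nat.le_of_mul_le_mul_right ?_ hpos
      rw [hs]
      exact Nat.mul_le_mul_left _ hle
  · induction j, h using Nat.le_induction with
    | base => exact le_rfl
    | succ i hi ih =>
      refine le_trans ?_ (ih (by omega))
      have hs := step i (by omega)
      have hle : (n - i) * k ≤ (i + 1) * (n - k) := by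
        refine Nat.mul_comm (i + 1) (n - k) ▸ Nat.mul_le_mul (by omega) (by omega)
      have hpos : 0 < (i + 1) * (n - k) := Nat.mul_pos (by omega) (by omega)
      refine Nat.le_of_mul_le_mul_right ?_ hpos
      rw [hs]
      exact Nat.mul_le_mul_left _ hle

lemma pow_self_le_mode (n k : ℕ) (hk : k < n) (hk0 : 0 < k) :
    n ^ n ≤ (n + 1) * (n.choose k * k ^ k * (n - k) ^ (n - k)) := by
  have h : n ^ n = ∑ j ∈ range (n + 1), k ^ j * (n - k) ^ (n - j) * n.choose j := by
    conv_lhs => rw [show n ^ n = (k + (n - k)) ^ n by rw [Nat.add_sub_of_le hk.le]]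
    exact add_pow _ _ _
  rw [h]
  calc _ ≤ ∑ _j ∈ range (n + 1), n.choose k * k ^ k * (n - k) ^ (n - k) := by
        refine Finset.sum_le_sum fun j hj => ?_
        rw [mul_comm, ← mul_assoc]
        exact binomial_term_le_mode n k hk hk0 j (by simpa [Nat.lt_succ_iff] using hj)
    _ = _ := by simp

/-- There are `n.choose k` binary words of weight `k`, so the ball of radius `k` has at least that
many points. -/
lemma choose_le_ball (n k : ℕ) :
    n.choose k ≤ (univ.filter fun s : Fin n → ZMod 2 => hammingNorm s ≤ k).card := by
  have h := Finset.card_powersetCard k (univ : Finset (Fin n))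
  rw [Finset.card_univ, Fintype.card_fin] at h
  rw [← h]
  refine Finset.card_le_card_of_injOn (fun t i => if i ∈ t then 1 else 0) ?_ ?_
  · intro t ht
    have ht' := (Finset.mem_powersetCard.1 ht).2
    simp [hammingNorm, ht']
  · intro t _ t' _ htt
    ext i
    have := congrFun htt i
    by_cases h1 : i ∈ t <;> by_cases h2 : i ∈ t' <;> simp_all

/-- The standard entropy lower bound on the volume of a Hamming ball. -/
lemma two_rpow_le_ball (n k : ℕ) (D : ℝ) (hD : D ∈ Set.Ioc (0 : ℝ) (1 / 2)) (hn : 0 < n)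
    (hk : (k : ℝ) = D * n) :
    (2 : ℝ) ^ (-(n : ℝ) * (1 - binEnt D)) ≤
      (n + 1) * ((univ.filter fun s : Fin n → ZMod 2 => (hammingNorm s : ℝ) ≤ D * n).card : ℝ)
        / 2 ^ n := by
  obtain ⟨hD0, hD1⟩ := hD
  have hn' : (0 : ℝ) < n := by exact_mod_cast hn
  have hk0 : 0 < k := by
    have : (0 : ℝ) < k := by rw [hk]; positivity
    exact_mod_cast this
  have hkn : k < n := by
    have : (k : ℝ) < n := by rw [hk]; nlinarith
    exact_mod_cast this
  have hD2 : 0 < 1 - D := by linarith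
  have hnk : ((n - k : ℕ) : ℝ) = (1 - D) * n := by
    rw [Nat.cast_sub hkn.le, hk]; ring
  -- `2^{-n h(D)} = D^k (1-D)^{n-k}`.
  have hent : (2 : ℝ) ^ ((n : ℝ) * binEnt D) * (D ^ k * (1 - D) ^ (n - k)) = 1 := by
    have e1 : D ^ k = (2 : ℝ) ^ (Real.logb 2 D * k) := by
      rw [Real.rpow_mul (by norm_num), Real.rpow_logb (by norm_num) (by norm_num) hD0,
        Real.rpow_natCast]
    have e2 : (1 - D) ^ (n - k) = (2 : ℝ) ^ (Real.logb 2 (1 - D) * (n - k : ℕ)) := by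
      rw [Real.rpow_mul (by norm_num), Real.rpow_logb (by norm_num) (by norm_num) hD2,
        Real.rpow_natCast]
    rw [e1, e2, ← Real.rpow_add (by norm_num), ← Real.rpow_add (by norm_num), hnk, hk,
      show (n : ℝ) * binEnt D + (Real.logb 2 D * (D * n) + Real.logb 2 (1 - D) * ((1 - D) * n)) = 0
        by unfold binEnt; ring, Real.rpow_zero]
  have hmode : (1 : ℝ) ≤ (n + 1) * (n.choose k * (D ^ k * (1 - D) ^ (n - k))) := by
    have h := pow_self_le_mode n k hkn hk0
    have h' : (n : ℝ) ^ n ≤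
        (n + 1) * (n.choose k * (k : ℝ) ^ k * ((n - k : ℕ) : ℝ) ^ (n - k)) := by
      exact_mod_cast h
    rw [hnk, hk, mul_pow, mul_pow] at h'
    have e : (n : ℝ) ^ n = (n : ℝ) ^ k * (n : ℝ) ^ (n - k) := by
      rw [← pow_add, Nat.add_sub_of_le hkn.le]
    have hp : (0 : ℝ) < (n : ℝ) ^ n := by positivity
    refine le_of_mul_le_mul_left ?_ hp
    rw [mul_one]
    refine h'.trans (le_of_eq ?_)
    rw [e]; ring
  have hX : (0 : ℝ) < D ^ k * (1 - D) ^ (n - k) := by positivity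
  have hball : (n.choose k : ℝ) ≤
      ((univ.filter fun s : Fin n → ZMod 2 => (hammingNorm s : ℝ) ≤ D * n).card : ℝ) := by
    have := choose_le_ball n k
    rw [← hk]
    simp only [Nat.cast_le]
    exact_mod_cast this
  have hsplit : (2 : ℝ) ^ (-(n : ℝ) * (1 - binEnt D)) = (2 : ℝ) ^ ((n : ℝ) * binEnt D) / 2 ^ n := by
    rw [show -(n : ℝ) * (1 - binEnt D) = (n : ℝ) * binEnt D - n by ring,
      Real.rpow_sub (by norm_num), Real.rpow_natCast]
  rw [hsplit]
  gcongr
  calc (2 : ℝ) ^ ((n : ℝ) * binEnt D)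
      ≤ (2 : ℝ) ^ ((n : ℝ) * binEnt D) * ((n + 1) * (n.choose k * (D ^ k * (1 - D) ^ (n - k)))) :=
        le_mul_of_one_le_right (by positivity) hmode
    _ = (n + 1) * n.choose k * ((2 : ℝ) ^ ((n : ℝ) * binEnt D) * (D ^ k * (1 - D) ^ (n - k))) := by
        ring
    _ = (n + 1) * n.choose k := by rw [hent, mul_one]
    _ ≤ _ := by gcongr

/-! ### Second moment -/

/-- `unifP` computed with an arbitrary decidability instance in place of the classical one. -/
lemma unifP_eq (Ω : Type*) [Fintype Ω] (E : Ω → Prop) [DecidablePred E] :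
    unifP Ω E = ((Finset.univ.filter E).card : ℝ) / (Fintype.card Ω : ℝ) := by
  unfold unifP
  congr!

section SecondMoment

variable {m n δ : ℕ}

lemma ldgmEnc_sub (I : Fin n → Fin δ → Fin m) (z w : Fin m → ZMod 2) :
    ldgmEnc I (z - w) = ldgmEnc I z - ldgmEnc I w := by
  ext j; simp [ldgmEnc]

lemma ldgmEnc_zero (I : Fin n → Fin δ → Fin m) : ldgmEnc I 0 = 0 := by
  ext j; simp [ldgmEnc]

/-- The shear `(I, s) ↦ (I, s - x_I(w))` of the probability space. -/
def shear (w : Fin m → ZMod 2) :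
    (Fin n → Fin δ → Fin m) × (Fin n → ZMod 2) ≃ (Fin n → Fin δ → Fin m) × (Fin n → ZMod 2) where
  toFun ω := (ω.1, ω.2 - ldgmEnc ω.1 w)
  invFun ω := (ω.1, ω.2 + ldgmEnc ω.1 w)
  left_inv ω := by simp
  right_inv ω := by simp

lemma hammingDist_shear (z w : Fin m → ZMod 2)
    (ω : (Fin n → Fin δ → Fin m) × (Fin n → ZMod 2)) :
    hammingDist (ldgmEnc (shear w ω).1 (z - w)) (shear w ω).2 =
      hammingDist (ldgmEnc ω.1 z) ω.2 := by
  rw [hammingDist_eq_hammingNorm, hammingDist_eq_hammingNorm]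
  congr 1
  simp only [shear, Equiv.coe_fn_mk, ldgmEnc_sub]
  abel

/-- The number of outcomes at which both `x(z)` and `x(w)` are within distance `R` of the source
depends on `z - w` only. -/
lemma card_close_pair (R : ℝ) (z w : Fin m → ZMod 2) :
    (univ.filter fun ω : (Fin n → Fin δ → Fin m) × (Fin n → ZMod 2) =>
      (hammingDist (ldgmEnc ω.1 z) ω.2 : ℝ) ≤ R ∧ (hammingDist (ldgmEnc ω.1 w) ω.2 : ℝ) ≤ R).card =
    (univ.filter fun ω : (Fin n → Fin δ → Fin m) × (Fin n → ZMod 2) =>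
      (hammingDist (ldgmEnc ω.1 (z - w)) ω.2 : ℝ) ≤ R ∧ (hammingNorm ω.2 : ℝ) ≤ R).card := by
  refine Finset.card_equiv (shear w) fun ω => ?_
  have h1 := hammingDist_shear z w ω
  have h2 := hammingDist_shear w w ω
  rw [sub_self, ldgmEnc_zero, hammingDist_zero_left] at h2
  simp [h1, h2]

/-- Second-moment lower bound on the number of outcomes at which some `x(z)`, `z ∈ C`, is within
distance `R` of the source. -/
lemma second_moment (R : ℝ) (C : Submodule (ZMod 2) (Fin m → ZMod 2))
    (hpos : 0 < (univ.filter fun s : Fin n → ZMod 2 => (hammingNorm s : ℝ) ≤ R).card)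
    (hm : 1 ≤ m) :
    (Nat.card C : ℝ) *
        ((univ.filter fun s : Fin n → ZMod 2 => (hammingNorm s : ℝ) ≤ R).card : ℝ) / 2 ^ n ≤
      unifP ((Fin n → Fin δ → Fin m) × (Fin n → ZMod 2))
        (fun ω => ∃ z ∈ C, (hammingDist (ldgmEnc ω.1 z) ω.2 : ℝ) ≤ R) *
      (1 + ∑ z : Fin m → ZMod 2, if z ∈ C ∧ z ≠ 0 then
          unifCondP ((Fin n → Fin δ → Fin m) × (Fin n → ZMod 2))
            (fun ω => (hammingDist (ldgmEnc ω.1 z) ω.2 : ℝ) ≤ R)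
            (fun ω => (hammingNorm ω.2 : ℝ) ≤ R)
        else 0) := by
  set V : ℝ := ((univ.filter fun s : Fin n → ZMod 2 => (hammingNorm s : ℝ) ≤ R).card : ℝ) with hV
  let Ω := (Fin n → Fin δ → Fin m) × (Fin n → ZMod 2)
  let A : ℝ := (Fintype.card (Fin n → Fin δ → Fin m) : ℝ)
  have hA : 0 < A := by
    have : Nonempty (Fin m) := ⟨⟨0, hm⟩⟩
    exact Nat.cast_pos.2 Fintype.card_pos
  have hV0 : 0 < V := by exact Nat.cast_pos.2 hpos
  have hΩ : (Fintype.card Ω : ℝ) = A * 2 ^ n := by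
    simp [Ω, A, Fintype.card_prod, ZMod.card]
  have hnorm : ((univ.filter fun ω : Ω => (hammingNorm ω.2 : ℝ) ≤ R).card : ℝ) = A * V := by
    have : (univ.filter fun ω : Ω => (hammingNorm ω.2 : ℝ) ≤ R) =
        univ ×ˢ (univ.filter fun s : Fin n → ZMod 2 => (hammingNorm s : ℝ) ≤ R) := by
      ext ω
      refine Iff.trans ?_ Finset.mem_product.symm
      simp only [Finset.mem_filter, Finset.mem_univ, true_and]
    rw [this, Finset.card_product]; simp [A, hV]
  let N : (Fin m → ZMod 2) → ℝ := fun z =>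
    ((univ.filter fun ω : Ω =>
      (hammingDist (ldgmEnc ω.1 z) ω.2 : ℝ) ≤ R ∧ (hammingNorm ω.2 : ℝ) ≤ R).card : ℝ)
  have hcond : ∀ z, N z = A * V * unifCondP Ω
      (fun ω => (hammingDist (ldgmEnc ω.1 z) ω.2 : ℝ) ≤ R)
      (fun ω => (hammingNorm ω.2 : ℝ) ≤ R) := by
    intro z
    unfold unifCondP unifP
    rw [hnorm, hΩ]
    simp only [N]
    field_simp
  have hN0 : N 0 = A * V := by
    rw [← hnorm]
    simp [N, ldgmEnc_zero, hammingDist_zero_left]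
  let Cf : Finset (Fin m → ZMod 2) := univ.filter fun z => z ∈ C
  have hCf : (Nat.card C : ℝ) = (Cf.card : ℝ) := by
    rw [Nat.card_eq_fintype_card]
    norm_cast
    exact Fintype.card_subtype _
  have hCpos : (0 : ℝ) < (Cf.card : ℝ) := by
    rw [← hCf]; exact_mod_cast Nat.card_pos
  set B : ℝ := ∑ z : Fin m → ZMod 2, if z ∈ C ∧ z ≠ 0 then
          unifCondP Ω
            (fun ω => (hammingDist (ldgmEnc ω.1 z) ω.2 : ℝ) ≤ R)
            (fun ω => (hammingNorm ω.2 : ℝ) ≤ R)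
        else 0 with hB
  have hsumN : ∑ z ∈ Cf, N z = A * V * (1 + B) := by
    have h0 : (0 : Fin m → ZMod 2) ∈ Cf := by simp [Cf]
    rw [← Finset.add_sum_erase _ _ h0, hN0, mul_add, mul_one, hB, ← Finset.sum_filter,
      Finset.mul_sum]
    congr 1
    refine Finset.sum_congr ?_ fun z _ => hcond z
    ext z; simp [Cf, and_comm]
  -- `T ω` counts the words of `C` whose encodings lie within distance `R` of the source.
  let g : Ω → (Fin m → ZMod 2) → ℝ := fun ω z =>
    if (hammingDist (ldgmEnc ω.1 z) ω.2 : ℝ) ≤ R then 1 else 0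
  let T : Ω → ℝ := fun ω => ∑ z ∈ Cf, g ω z
  have hT1 : ∑ ω, T ω = Cf.card * (A * V) := by
    simp only [T]
    rw [Finset.sum_comm]
    have : ∀ z ∈ Cf, ∑ ω, g ω z = A * V := by
      intro z _
      have := card_close_pair (n := n) (δ := δ) R z z
      rw [sub_self] at this
      rw [← hN0]
      simp only [N, g, Finset.sum_boole]
      rw [← this]
      simp
      rfl
    rw [Finset.sum_congr rfl this]; simp
  have hT2 : ∑ ω, T ω ^ 2 = Cf.card * (A * V * (1 + B)) := by
    simp only [T, sq, Finset.sum_mul_sum]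
    rw [Finset.sum_comm]
    have h1 : ∀ w ∈ Cf, ∑ ω, ∑ z ∈ Cf, g ω w * g ω z = A * V * (1 + B) := by
      intro w hw
      rw [Finset.sum_comm, ← hsumN]
      have h2 : ∀ z, ∑ ω, g ω w * g ω z = N (z - w) := by
        intro z
        simp only [N]
        rw [← card_close_pair, ← Finset.sum_boole]
        refine Finset.sum_congr rfl fun ω _ => ?_
        simp only [g]
        by_cases ha : (hammingDist (ldgmEnc ω.1 w) ω.2 : ℝ) ≤ R <;>
          by_cases hb : (hammingDist (ldgmEnc ω.1 z) ω.2 : ℝ) ≤ R <;> simp [ha, hb]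
      simp only [h2]
      have hw' : w ∈ C := by simpa [Cf] using hw
      refine Finset.sum_bij' (fun z _ => z - w) (fun z _ => z + w) ?_ ?_ ?_ ?_ ?_
      · intro z hz
        have hz' : z ∈ C := by simpa [Cf] using hz
        simpa [Cf] using C.sub_mem hz' hw'
      · intro z hz
        have hz' : z ∈ C := by simpa [Cf] using hz
        simpa [Cf] using C.add_mem hz' hw'
      · intros; simp
      · intros; simp
      · intros; rfl
    rw [Finset.sum_congr rfl h1]; simp
  let E : Finset Ω := univ.filter fun ω =>
    ∃ z ∈ C, (hammingDist (ldgmEnc ω.1 z) ω.2 : ℝ) ≤ R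
  have hTE : ∑ ω, T ω = ∑ ω ∈ E, T ω := by
    symm
    refine Finset.sum_subset (Finset.subset_univ _) fun ω _ hω => ?_
    refine Finset.sum_eq_zero fun z hz => ?_
    have hz' : z ∈ C := by simpa [Cf] using hz
    simp only [g]
    refine if_neg fun hle => hω ?_
    simpa [E] using ⟨z, hz', hle⟩
  have hCS : (∑ ω, T ω) ^ 2 ≤ E.card * ∑ ω, T ω ^ 2 := by
    rw [hTE]
    refine (sq_sum_le_card_mul_sum_sq (s := E) (f := T)).trans ?_
    refine mul_le_mul_of_nonneg_left ?_ (Nat.cast_nonneg _)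
    exact Finset.sum_le_sum_of_subset_of_nonneg (Finset.subset_univ _) fun _ _ _ => sq_nonneg _
  rw [hT1, hT2] at hCS
  have hfin : (Cf.card : ℝ) * (A * V) ≤ E.card * (1 + B) := by
    have hp : (0 : ℝ) < Cf.card * (A * V) := by positivity
    refine le_of_mul_le_mul_left ?_ hp
    nlinarith [hCS]
  have hPE : unifP Ω (fun ω => ∃ z ∈ C, (hammingDist (ldgmEnc ω.1 z) ω.2 : ℝ) ≤ R) =
      E.card / (A * 2 ^ n) := by
    rw [unifP_eq, hΩ]
  rw [hPE, hCf, div_mul_eq_mul_div, div_le_div_iff₀ (by positivity) (by positivity)]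
  calc (Cf.card : ℝ) * V * (A * 2 ^ n) = Cf.card * (A * V) * 2 ^ n := by ring
    _ ≤ _ := by gcongr

/-! ### Concentration of the minimum distance -/

/-- Minimum distance from the source word to the encodings of `C`, as a function of the `n`
independent pairs (row of indices, source bit). -/
def minDist (C : Submodule (ZMod 2) (Fin m → ZMod 2))
    (x : Fin n → (Fin δ → Fin m) × ZMod 2) : ℕ :=
  (univ.filter fun z => z ∈ C).inf' ⟨0, by simp⟩
    fun z => hammingDist (ldgmEnc (fun j => (x j).1) z) (fun j => (x j).2)

lemma minDist_le_iff (C : Submodule (ZMod 2) (Fin m → ZMod 2))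
    (x : Fin n → (Fin δ → Fin m) × ZMod 2) (R : ℝ) :
    (minDist C x : ℝ) ≤ R ↔
      ∃ z ∈ C, (hammingDist (ldgmEnc (fun j => (x j).1) z) (fun j => (x j).2) : ℝ) ≤ R := by
  constructor
  · intro h
    obtain ⟨z, hz, he⟩ := Finset.exists_mem_eq_inf' (s := univ.filter fun z => z ∈ C)
      ⟨0, by simp⟩ (fun z => hammingDist (ldgmEnc (fun j => (x j).1) z) (fun j => (x j).2))
    refine ⟨z, by simpa using hz, ?_⟩
    rw [← he]; exact h
  · rintro ⟨z, hz, h⟩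
    refine le_trans (Nat.cast_le.2 ?_) h
    exact Finset.inf'_le _ (by simpa using hz)

lemma minDist_update_le (C : Submodule (ZMod 2) (Fin m → ZMod 2))
    (x : Fin n → (Fin δ → Fin m) × ZMod 2) (i : Fin n) (a : (Fin δ → Fin m) × ZMod 2) :
    (minDist C (Function.update x i a) : ℝ) ≤ minDist C x + 1 := by
  obtain ⟨z, hz, h⟩ := (minDist_le_iff C x _).1 le_rfl
  refine (minDist_le_iff C _ _).2 ⟨z, hz, ?_⟩
  refine le_trans ?_ (add_le_add_left h 1)
  norm_cast
  unfold hammingDist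
  refine (Finset.card_le_card ?_).trans (Finset.card_insert_le i _)
  intro j hj
  by_cases hji : j = i
  · simp [hji]
  · simpa [hji, ldgmEnc] using hj

lemma unifP_mul_unifP_le (C : Submodule (ZMod 2) (Fin m → ZMod 2)) (hm : 1 ≤ m) (D ε : ℝ)
    (hε : 0 < ε) :
    unifP ((Fin n → Fin δ → Fin m) × (Fin n → ZMod 2))
        (fun ω => ∃ z ∈ C, (hammingDist (ldgmEnc ω.1 z) ω.2 : ℝ) ≤ D * n) *
      unifP ((Fin n → Fin δ → Fin m) × (Fin n → ZMod 2))
        (fun ω => ∀ z ∈ C, ((D + ε) * n : ℝ) < hammingDist (ldgmEnc ω.1 z) ω.2) ≤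
      Real.exp (-(ε ^ 2 / 2 * n)) := by
  have h := card_mul_card_le n (fun x => (minDist (n := n) (δ := δ) C x : ℝ))
    (minDist_update_le C) D ε hε
  let e := (Equiv.arrowProdEquivProdArrow (Fin n) (fun _ => Fin δ → Fin m) (fun _ => ZMod 2))
  have e1 : (univ.filter fun ω : (Fin n → Fin δ → Fin m) × (Fin n → ZMod 2) =>
      ∃ z ∈ C, (hammingDist (ldgmEnc ω.1 z) ω.2 : ℝ) ≤ D * n).card =
      (univ.filter fun x => (minDist (n := n) (δ := δ) C x : ℝ) ≤ D * n).card := by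
    refine (Finset.card_equiv e fun x => ?_).symm
    simp only [Finset.mem_filter, Finset.mem_univ, true_and]
    exact minDist_le_iff C x _
  have e2 : (univ.filter fun ω : (Fin n → Fin δ → Fin m) × (Fin n → ZMod 2) =>
      ∀ z ∈ C, ((D + ε) * n : ℝ) < hammingDist (ldgmEnc ω.1 z) ω.2).card =
      (univ.filter fun x => (D + ε) * n < (minDist (n := n) (δ := δ) C x : ℝ)).card := by
    refine (Finset.card_equiv e fun x => ?_).symm
    simp only [Finset.mem_filter, Finset.mem_univ, true_and]
    rw [← not_le, minDist_le_iff]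
    push Not
    rfl
  have hcard : (Fintype.card ((Fin n → Fin δ → Fin m) × (Fin n → ZMod 2)) : ℝ) =
      (Fintype.card ((Fin δ → Fin m) × ZMod 2) : ℝ) ^ n := by
    rw [← Fintype.card_congr e, Fintype.card_fun, Fintype.card_fin, Nat.cast_pow]
  have hc0 : (0 : ℝ) < (Fintype.card ((Fin δ → Fin m) × ZMod 2) : ℝ) := by
    have : Nonempty (Fin m) := ⟨⟨0, hm⟩⟩
    exact Nat.cast_pos.2 Fintype.card_pos
  rw [unifP_eq, unifP_eq, e1, e2, hcard, div_mul_div_comm, ← sq, div_le_iff₀ (by positivity), mul_comm (Real.exp _)]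
  exact h

end SecondMoment

/-- along a sequence of blocklengths `ν i → ∞` with `D·ν i ∈ ℕ`, if the
compound codes built from the bottom codes `C_b^{(ν i)}` eventually satisfy `B_n ≥ 1` and
`|C_b^{(n)}|·2^{-n(1-h(D))} ≥ B_n` (the hypotheses of STATEMENT 11), then for every
`ε > 0` the probability that every codeword of the compound code is farther than
`(D+ε)·n` from the uniform source (i.e. the minimum distortion exceeds `(D+ε)·n`) tends
to `0`. -/
theorem distortion_concentration (δ : ℕ) (hδeven : Even δ) (hδ : 2 ≤ δ)
    (D : ℝ) (hD : D ∈ Set.Ioc (0 : ℝ) (1 / 2))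
    (ν : ℕ → ℕ) (hν : StrictMono ν) (hDν : ∀ i, ∃ k : ℕ, (k : ℝ) = D * ν i)
    (m : ℕ → ℕ) (hm : ∀ i, 1 ≤ m i)
    (Cb : ∀ i, Submodule (ZMod 2) (Fin (m i) → ZMod 2))
    (B : ℕ → ℝ)
    (hBdef : ∀ i, B i = ∑ z : Fin (m i) → ZMod 2,
        if z ∈ Cb i ∧ z ≠ 0 then
          unifCondP ((Fin (ν i) → Fin δ → Fin (m i)) × (Fin (ν i) → ZMod 2))
            (fun ω => (hammingDist (ldgmEnc ω.1 z) ω.2 : ℝ) ≤ D * ν i)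
            (fun ω => (hammingNorm ω.2 : ℝ) ≤ D * ν i)
        else 0)
    (hlarge : ∀ᶠ i in Filter.atTop, 1 ≤ B i ∧
        B i ≤ (Nat.card (Cb i) : ℝ) * (2 : ℝ) ^ (-(ν i : ℝ) * (1 - binEnt D))) :
    ∀ ε : ℝ, 0 < ε →
      Filter.Tendsto
        (fun i =>
          unifP ((Fin (ν i) → Fin δ → Fin (m i)) × (Fin (ν i) → ZMod 2))
            (fun ω => ∀ z ∈ Cb i, ((D + ε) * ν i : ℝ) < hammingDist (ldgmEnc ω.1 z) ω.2))
        Filter.atTop (nhds 0) := by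
  intro ε hε
  have hν' : Filter.Tendsto (fun i => (ν i : ℝ)) Filter.atTop Filter.atTop :=
    tendsto_natCast_atTop_atTop.comp hν.tendsto_atTop
  -- The bound obtained for `P(d_min > (D + ε) n)` is `2 (n + 1) e^{-ε² n / 2}`.
  have hlim : Filter.Tendsto
      (fun i => 2 * ((ν i : ℝ) + 1) * Real.exp (-(ε ^ 2 / 2 * (ν i : ℝ))))
      Filter.atTop (nhds 0) := by
    have hb : 0 < ε ^ 2 / 2 := by positivity
    have h1 : Filter.Tendsto (fun x : ℝ => x * Real.exp (-(ε ^ 2 / 2 * x)))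
        Filter.atTop (nhds 0) := by
      have := tendsto_rpow_mul_exp_neg_mul_atTop_nhds_zero 1 (ε ^ 2 / 2) hb
      simpa using this
    have h0 : Filter.Tendsto (fun x : ℝ => Real.exp (-(ε ^ 2 / 2 * x)))
        Filter.atTop (nhds 0) := by
      have := tendsto_rpow_mul_exp_neg_mul_atTop_nhds_zero 0 (ε ^ 2 / 2) hb
      simpa using this
    have h2 : Filter.Tendsto (fun x : ℝ => 2 * (x + 1) * Real.exp (-(ε ^ 2 / 2 * x)))
        Filter.atTop (nhds 0) := by
      have := (h1.add h0).const_mul 2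
      rw [add_zero, mul_zero] at this
      exact this.congr fun x => by ring
    exact h2.comp hν'
  refine squeeze_zero' (Filter.Eventually.of_forall fun i => ?_) ?_ hlim
  · unfold unifP; positivity
  filter_upwards [hlarge, hν.tendsto_atTop.eventually_gt_atTop 0] with i hi hni
  obtain ⟨k, hk⟩ := hDν i
  obtain ⟨hB1, hB2⟩ := hi
  have hvol := two_rpow_le_ball (ν i) k D hD hni hk
  have hVpos : 0 < (univ.filter fun s : Fin (ν i) → ZMod 2 =>
      (hammingNorm s : ℝ) ≤ D * ν i).card := by
    refine Finset.card_pos.2 ⟨0, ?_⟩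
    simp only [Finset.mem_filter, Finset.mem_univ, true_and, hammingNorm_zero, Nat.cast_zero]
    have := hD.1
    positivity
  have hsm := second_moment (δ := δ) (D * ν i) (Cb i) hVpos (hm i)
  rw [← hBdef i] at hsm
  have hconc := unifP_mul_unifP_le (n := ν i) (δ := δ) (Cb i) (hm i) D ε hε
  set V : ℝ := ((univ.filter fun s : Fin (ν i) → ZMod 2 =>
      (hammingNorm s : ℝ) ≤ D * ν i).card : ℝ)
  set P := unifP ((Fin (ν i) → Fin δ → Fin (m i)) × (Fin (ν i) → ZMod 2))
        (fun ω => ∃ z ∈ Cb i, (hammingDist (ldgmEnc ω.1 z) ω.2 : ℝ) ≤ D * ν i)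
  set Q := unifP ((Fin (ν i) → Fin δ → Fin (m i)) × (Fin (ν i) → ZMod 2))
        (fun ω => ∀ z ∈ Cb i, ((D + ε) * ν i : ℝ) < hammingDist (ldgmEnc ω.1 z) ω.2)
  have hQ0 : 0 ≤ Q := by simp only [Q, unifP]; positivity
  have hn0 : (0 : ℝ) < (ν i : ℝ) + 1 := by positivity
  have hBle : B i ≤ (ν i + 1) * (P * (1 + B i)) := by
    calc B i ≤ _ := hB2
      _ ≤ (Nat.card (Cb i) : ℝ) * ((ν i + 1) * V / 2 ^ (ν i)) := by gcongr
      _ = (ν i + 1) * ((Nat.card (Cb i) : ℝ) * V / 2 ^ (ν i)) := by ring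
      _ ≤ _ := by gcongr
  -- Since `B ≥ 1`, `B / (1 + B) ≥ 1/2`.
  have hP : 1 ≤ 2 * (ν i + 1) * P := by
    by_contra hlt
    push Not at hlt
    nlinarith
  calc Q ≤ (2 * (ν i + 1) * P) * Q := le_mul_of_one_le_left hQ0 hP
    _ = 2 * (ν i + 1) * (P * Q) := by ring
    _ ≤ _ := by gcongr
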